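/- Let G be a 2-connected graph with no compliant edges that is not a cycle, let xy be an edge of G, let S be the vertex set of a connected component of G - {x,y}, and let H be the subgraph of G induced on S ∪ {x,y}. Then H is not outerplanar. -/

import Mathlib

open SimpleGraph

universe u

/-- A flat (suspended) path: a path of length at least 2 all of whose internal
vertices have degree 2 in `G`. -/
def IsFlatPath {V : Type u} (G : SimpleGraph V) {x y : V} (p : G.Walk x y) : Prop :=
  p.IsPath ∧ 2 ≤ p.length ∧
    ∀ v ∈ p.support, v ≠ x → v ≠ y → (G.neighborSet v).ncard = 2

/-- An edge `xy` is compliant if `x` and `y` are also joined by a flat path. -/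
def Compliant {V : Type u} (G : SimpleGraph V) (x y : V) : Prop :=
  G.Adj x y ∧ ∃ p : G.Walk x y, IsFlatPath G p

/-- A graph is 2-connected if it has at least 3 vertices and remains connected
after deleting any single vertex. -/
def TwoConnected {V : Type u} (G : SimpleGraph V) : Prop :=
  3 ≤ Nat.card V ∧ ∀ v : V, ((⊤ : G.Subgraph).deleteVerts {v}).coe.Connected

/-- A (finite) graph is a cycle iff it is connected and 2-regular. -/
def IsCycleGraph {V : Type u} (G : SimpleGraph V) : Prop :=
  G.Connected ∧ ∀ v : V, (G.neighborSet v).ncard = 2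

/-- Data exhibiting a subgraph of `G` which is a subdivision of `H`:
branch vertices are given by an injection `f`, and each edge of `H` is
replaced by a path in `G`, these paths being internally disjoint and their
internal vertices avoiding the branch vertices. -/
structure SubdivisionIn {V : Type u} {W : Type*} (G : SimpleGraph V) (H : SimpleGraph W) where
  f : W → V
  inj : Function.Injective f
  path : ∀ ⦃u v : W⦄, H.Adj u v → G.Walk (f u) (f v)
  isPath : ∀ ⦃u v : W⦄ (h : H.Adj u v), (path h).IsPath
  internal_not_branch : ∀ ⦃u v : W⦄ (h : H.Adj u v), ∀ w ∈ (path h).support,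
      (∃ z, w = f z) → w = f u ∨ w = f v
  internal_disjoint : ∀ ⦃u v u' v' : W⦄ (h : H.Adj u v) (h' : H.Adj u' v'),
      s(u, v) ≠ s(u', v') → ∀ w ∈ (path h).support, w ∈ (path h').support →
        w = f u ∨ w = f v

/-- The vertices of the subdivided subgraph. -/
def SubdivisionIn.verts {V : Type u} {W : Type*} {G : SimpleGraph V} {H : SimpleGraph W}
    (D : SubdivisionIn G H) : Set V :=
  {w | ∃ (u v : W) (h : H.Adj u v), w ∈ (D.path h).support}

/-- `G` contains a subdivision of `H` as a subgraph. -/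
def ContainsSubdivision {V : Type u} {W : Type*} (G : SimpleGraph V) (H : SimpleGraph W) : Prop :=
  Nonempty (SubdivisionIn G H)

/-- A graph is outerplanar iff it contains no subdivision of `K₄` or `K_{2,3}`
as a subgraph. -/
def Outerplanar {V : Type u} (G : SimpleGraph V) : Prop :=
  ¬ ContainsSubdivision G (⊤ : SimpleGraph (Fin 4)) ∧
  ¬ ContainsSubdivision G (completeBipartiteGraph (Fin 2) (Fin 3))

/-- `a` and `b` are joined by a walk inside `A`. -/
def Joined' {V : Type u} (G : SimpleGraph V) (A : Set V) (a b : V) : Prop :=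
  ∃ w : G.Walk a b, ∀ v ∈ w.support, v ∈ A

lemma Joined'.refl {V : Type u} {G : SimpleGraph V} {A : Set V} {a : V} (h : a ∈ A) :
    Joined' G A a a := ⟨Walk.nil, by simpa using h⟩

lemma Joined'.symm {V : Type u} {G : SimpleGraph V} {A : Set V} {a b : V} (h : Joined' G A a b) :
    Joined' G A b a := by
  obtain ⟨w, hw⟩ := h
  exact ⟨w.reverse, by simpa using hw⟩

lemma Joined'.trans {V : Type u} {G : SimpleGraph V} {A : Set V} {a b c : V}
    (h : Joined' G A a b) (h' : Joined' G A b c) : Joined' G A a c := by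
  obtain ⟨w, hw⟩ := h
  obtain ⟨w', hw'⟩ := h'
  refine ⟨w.append w', fun v hv => ?_⟩
  rw [Walk.mem_support_append_iff] at hv
  exact hv.elim (hw v) (hw' v)

lemma Joined'.mono {V : Type u} {G : SimpleGraph V} {A B : Set V} {a b : V}
    (h : Joined' G A a b) (hAB : A ⊆ B) : Joined' G B a b := by
  obtain ⟨w, hw⟩ := h
  exact ⟨w, fun v hv => hAB (hw v hv)⟩

lemma Joined'.adj {V : Type u} {G : SimpleGraph V} {A : Set V} {a b : V}
    (h : G.Adj a b) (ha : a ∈ A) (hb : b ∈ A) : Joined' G A a b :=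
  ⟨h.toWalk, by intro v hv; simp at hv; rcases hv with rfl | rfl <;> assumption⟩

lemma Joined'.left {V : Type u} {G : SimpleGraph V} {A : Set V} {a b : V}
    (h : Joined' G A a b) : a ∈ A := by
  obtain ⟨w, hw⟩ := h
  exact hw _ w.start_mem_support

lemma Joined'.right {V : Type u} {G : SimpleGraph V} {A : Set V} {a b : V}
    (h : Joined' G A a b) : b ∈ A := h.symm.left

lemma Joined'.boundary {V : Type u} {G : SimpleGraph V} {A : Set V} {a b : V}
    (h : Joined' G A a b) (D : Set V) (ha : a ∈ D) (hb : b ∉ D) :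
    ∃ u v, G.Adj u v ∧ u ∈ D ∧ v ∉ D ∧ v ∈ A := by
  obtain ⟨w, hw⟩ := h
  obtain ⟨d, hd, h1, h2⟩ := w.exists_boundary_dart D ha hb
  exact ⟨d.fst, d.snd, d.adj, h1, h2, hw _ (w.dart_snd_mem_support_of_mem_darts hd)⟩

lemma mkSub {V : Type u} {W : Type*} (G : SimpleGraph V) (H : SimpleGraph W) (T : Set V)
    (f : W → V) (inj : Function.Injective f) (hf : ∀ z, f z ∈ T) (A : W → W → Set V)
    (hT : ∀ u v, H.Adj u v → A u v ⊆ T)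
    (hJ : ∀ u v, H.Adj u v → Joined' G (A u v) (f u) (f v))
    (hbr : ∀ u v z, H.Adj u v → f z ∈ A u v → z = u ∨ z = v)
    (hdis : ∀ u v u' v', H.Adj u v → H.Adj u' v' → s(u, v) ≠ s(u', v') →
      ∀ w, w ∈ A u v → w ∈ A u' v' → w = f u ∨ w = f v) :
    ContainsSubdivision (G.induce T) H := by
  classical
  have key : ∀ u v, H.Adj u v → ∃ w : (G.induce T).Walk ⟨f u, hf u⟩ ⟨f v, hf v⟩,
      w.IsPath ∧ ∀ z ∈ w.support, (z : V) ∈ A u v := by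
    intro u v h
    obtain ⟨w, hw⟩ := hJ u v h
    let w' := w.induce T (fun z hz => hT u v h (hw z hz))
    refine ⟨w'.bypass, w'.bypass_isPath, fun z hz => ?_⟩
    have hz' := w'.support_bypass_subset_support hz
    rw [Walk.support_induce] at hz'
    simp at hz'
    exact hw _ hz'
  choose p hp1 hp2 using key
  refine ⟨⟨fun z => ⟨f z, hf z⟩, fun a b hab => inj (by simpa using hab), fun u v h => p u v h,
    fun u v h => hp1 u v h, ?_, ?_⟩⟩
  · rintro u v h w hw ⟨z, rfl⟩
    rcases hbr u v z h (hp2 u v h _ hw) with rfl | rfl <;> simp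
  · intro u v u' v' h h' hne w hw hw'
    rcases hdis u v u' v' h h' hne w (hp2 _ _ _ _ hw) (hp2 _ _ _ _ hw') with h | h
    · left; exact Subtype.ext h
    · right; exact Subtype.ext h

lemma mkK23 {V : Type u} (G : SimpleGraph V) (T : Set V) (a b : V) (hab : a ≠ b)
    (haT : a ∈ T) (hbT : b ∈ T) (C : Fin 3 → Set V) (m : Fin 3 → V)
    (hCT : ∀ i, C i ⊆ T) (haC : ∀ i, a ∉ C i)
    (hdisj : ∀ i j, i ≠ j → ∀ w, w ∈ C i → w ∈ C j → w = b)
    (hmb : ∀ i, m i ≠ b) (ham : ∀ i, G.Adj a (m i)) (hJ : ∀ i, Joined' G (C i) (m i) b) :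
    ContainsSubdivision (G.induce T) (completeBipartiteGraph (Fin 2) (Fin 3)) := by
  have hmC : ∀ i, m i ∈ C i := fun i => (hJ i).left
  have hbC : ∀ i, b ∈ C i := fun i => (hJ i).right
  have hma : ∀ i, m i ≠ a := fun i h => haC i (h ▸ hmC i)
  have hminj : ∀ i j, m i = m j → i = j := by
    intro i j h
    by_contra hne
    exact hmb i (hdisj i j hne _ (hmC i) (h ▸ hmC j))
  have hmC' : ∀ i j, m i ∈ C j → i = j := by
    intro i j h
    by_contra hne
    exact hmb i (hdisj i j hne _ (hmC i) h)
  let B : Fin 2 → Fin 3 → Set V := fun k i => if k = 0 then {a, m i} else C i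
  let F : Fin 2 → V := fun k => if k = 0 then a else b
  have hB : ∀ k i, Joined' G (B k i) (F k) (m i) := by
    intro k i
    by_cases hk : k = 0
    · simp only [B, F, hk, if_true]
      exact Joined'.adj (ham i) (by simp) (by simp)
    · simp only [B, F, hk, if_false]
      exact (hJ i).symm
  have hBT : ∀ k i, B k i ⊆ T := by
    intro k i
    by_cases hk : k = 0
    · simp only [B, hk, if_true]
      rintro v (rfl | rfl)
      · exact haT
      · exact hCT i (hmC i)
    · simp only [B, hk, if_false]
      exact hCT i
  have hFB : ∀ k k' i, F k ∈ B k' i → k = k' := by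
    intro k k' i
    simp only [F, B]
    split_ifs <;> grind
  have hmB : ∀ j k i, m j ∈ B k i → j = i := by
    intro j k i
    simp only [B]
    split_ifs <;> grind
  have hBB : ∀ k i k' i', (k ≠ k' ∨ i ≠ i') → ∀ w, w ∈ B k i → w ∈ B k' i' →
      w = F k ∨ w = m i := by
    intro k i k' i'
    simp only [B, F]
    split_ifs <;> grind
  refine mkSub G _ T (Sum.elim F m) ?_ ?_ (fun u v => match u, v with
    | Sum.inl k, Sum.inr i => B k i
    | Sum.inr i, Sum.inl k => B k i
    | _, _ => ∅) ?_ ?_ ?_ ?_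
  · rintro (k | i) (k' | i') h
    · have : F k = F k' := h
      simp only [F] at this
      congr 1
      split_ifs at this <;> grind
    · exfalso
      have : F k = m i' := h
      simp only [F] at this
      split_ifs at this <;> grind
    · exfalso
      have : m i = F k' := h
      simp only [F] at this
      split_ifs at this <;> grind
    · congr 1
      exact hminj _ _ h
  · rintro (k | i)
    · simp only [Sum.elim_inl, F]
      split_ifs <;> assumption
    · exact hCT i (hmC i)
  · rintro (k | i) (k' | i') h <;> simp at h ⊢
    · exact hBT _ _
    · exact hBT _ _
  · rintro (k | i) (k' | i') h <;> simp at h ⊢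
    · exact hB _ _
    · exact (hB _ _).symm
  · rintro (k | i) (k' | i') (z | z) h <;> simp at h ⊢
    · exact hFB _ _ _
    · exact hmB _ _ _
    · exact hFB _ _ _
    · exact hmB _ _ _
  · rintro (k | i) (k' | i') (l | j) (l' | j') h h' <;> simp at h h' ⊢
    · intro hne w h1 h2
      exact hBB k i' l j' (by grind) w h1 h2
    · intro hne w h1 h2
      exact hBB k i' l' j (by grind) w h1 h2
    · intro hne w h1 h2
      exact (hBB k' i l j' (by grind) w h1 h2).symm
    · intro hne w h1 h2
      exact (hBB k' i l' j (by grind) w h1 h2).symm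

/-- Walk along a function. -/
lemma segWalk {V : Type u} (G : SimpleGraph V) (p : ℕ → V) (n : ℕ)
    (hadj : ∀ k < n, G.Adj (p k) (p (k + 1))) (m : ℕ) : ∀ i j, j = i + m → j ≤ n →
    ∃ w : G.Walk (p i) (p j), w.support = (List.range' i (m + 1)).map p := by
  induction m with
  | zero =>
    rintro i j rfl h
    exact ⟨Walk.nil, by simp⟩
  | succ m ih =>
    intro i j hj h
    obtain ⟨w, hw⟩ := ih (i + 1) j (by omega) h
    refine ⟨Walk.cons (hadj i (by omega)) w, ?_⟩
    rw [Walk.support_cons, hw, List.range'_succ (n := m + 1), List.map_cons]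

lemma segJoined {V : Type u} (G : SimpleGraph V) (p : ℕ → V) (n : ℕ)
    (hadj : ∀ k < n, G.Adj (p k) (p (k + 1))) (i j : ℕ) (hij : i ≤ j) (hj : j ≤ n) :
    Joined' G (p '' Set.Icc i j) (p i) (p j) := by
  obtain ⟨w, hw⟩ := segWalk G p n hadj (j - i) i j (by omega) hj
  refine ⟨w, fun v hv => ?_⟩
  rw [hw] at hv
  simp only [List.mem_map, List.mem_range'_1] at hv
  obtain ⟨k, hk, rfl⟩ := hv
  exact ⟨k, ⟨hk.1, by omega⟩, rfl⟩

/-- A path from `x` to `y` of length `n` with internal vertices in `S`. -/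
structure PathFn {V : Type u} (G : SimpleGraph V) (x y : V) (S : Set V) (p : ℕ → V) (n : ℕ) :
    Prop where
  start : p 0 = x
  fin : p n = y
  mem : ∀ k, 0 < k → k < n → p k ∈ S
  inj : ∀ i j, i ≤ n → j ≤ n → p i = p j → i = j
  adj : ∀ k < n, G.Adj (p k) (p (k + 1))

lemma PathFn.image {V : Type u} {G : SimpleGraph V} {x y : V} {S : Set V} {p : ℕ → V} {n : ℕ}
    (h : PathFn G x y S p n) {B : Set ℕ} (hB : ∀ k ∈ B, k ≤ n) {k : ℕ} (hk : k ≤ n)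
    (hm : p k ∈ p '' B) : k ∈ B := by
  obtain ⟨l, hl, e⟩ := hm
  rwa [← h.inj l k (hB l hl) hk e]

lemma PathFn.memT {V : Type u} {G : SimpleGraph V} {x y : V} {S : Set V} {p : ℕ → V} {n : ℕ}
    (h : PathFn G x y S p n) (k : ℕ) (hk : k ≤ n) : p k ∈ S ∪ {x, y} := by
  rcases Nat.eq_zero_or_pos k with rfl | h0
  · simp [h.start]
  · rcases hk.eq_or_lt with rfl | h1
    · simp [h.fin]
    · exact Or.inl (h.mem k h0 h1)

lemma mkK4 {V : Type u} {G : SimpleGraph V} {x y : V} {S : Set V} {p : ℕ → V} {n : ℕ}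
    (h : PathFn G x y S p n) (hxy : G.Adj x y) (a b c d : ℕ) (hab : a < b) (hbc : b < c)
    (hcd : c < d) (hd : d ≤ n) (hac : G.Adj (p a) (p c)) (hbd : G.Adj (p b) (p d)) :
    ContainsSubdivision (G.induce (S ∪ {x, y})) (⊤ : SimpleGraph (Fin 4)) := by
  have h01 := segJoined G p n h.adj a b (by omega) (by omega)
  have h12 := segJoined G p n h.adj b c (by omega) (by omega)
  have h23 := segJoined G p n h.adj c d (by omega) (by omega)
  have h02 : Joined' G (p '' {a, c}) (p a) (p c) := Joined'.adj hac ⟨a, by simp⟩ ⟨c, by simp⟩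
  have h13 : Joined' G (p '' {b, d}) (p b) (p d) := Joined'.adj hbd ⟨b, by simp⟩ ⟨d, by simp⟩
  have h03 : Joined' G (p '' (Set.Icc 0 a ∪ Set.Icc d n)) (p a) (p d) := by
    have e1 := (segJoined G p n h.adj 0 a (by omega) (by omega)).symm
    have e2 := (segJoined G p n h.adj d n (by omega) (by omega)).symm
    have e3 : G.Adj (p 0) (p n) := by rw [h.start, h.fin]; exact hxy
    refine (e1.mono (Set.image_mono Set.subset_union_left)).trans
      (Joined'.trans (Joined'.adj e3 ⟨0, by simp⟩ ⟨n, ?_, rfl⟩)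
        (e2.mono (Set.image_mono Set.subset_union_right)))
    right; exact ⟨hd, le_refl _⟩
  let g : Fin 4 → ℕ := ![a, b, c, d]
  -- index sets for `u < v`
  let B : Fin 4 → Fin 4 → Set ℕ := fun u v =>
    if u = 0 ∧ v = 1 then Set.Icc a b else
    if u = 1 ∧ v = 2 then Set.Icc b c else
    if u = 2 ∧ v = 3 then Set.Icc c d else
    if u = 0 ∧ v = 3 then Set.Icc 0 a ∪ Set.Icc d n else
    if u = 0 ∧ v = 2 then {a, c} else {b, d}
  have hg : ∀ u, g u ≤ n := by
    intro u; fin_cases u <;> simp [g] <;> omega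
  have hginj : ∀ u v, g u = g v → u = v := by
    intro u v; fin_cases u <;> fin_cases v <;> simp [g] <;> omega
  have hBn : ∀ u v, u < v → ∀ k ∈ B u v, k ≤ n := by
    intro u v huv k
    fin_cases u <;> fin_cases v <;> simp [B] at huv ⊢ <;> omega
  have hBg : ∀ u v z, u < v → g z ∈ B u v → z = u ∨ z = v := by
    intro u v z huv
    fin_cases u <;> fin_cases v <;> simp at huv <;> fin_cases z <;> simp [B, g] <;> omega
  have hBB : ∀ u v u' v', u < v → u' < v' → (u ≠ u' ∨ v ≠ v') → ∀ k, k ∈ B u v → k ∈ B u' v' →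
      k = g u ∨ k = g v := by
    intro u v u' v' huv huv'
    fin_cases u <;> fin_cases v <;> simp at huv <;> fin_cases u' <;> fin_cases v' <;>
      simp at huv' <;> simp [B, g] <;> omega
  have hJ : ∀ u v, u < v → Joined' G (p '' B u v) (p (g u)) (p (g v)) := by
    intro u v huv
    fin_cases u <;> fin_cases v <;> simp at huv
    · simpa [B, g] using h01
    · simpa [B, g] using h02
    · simpa [B, g] using h03
    · simpa [B, g] using h12
    · simpa [B, g] using h13
    · simpa [B, g] using h23
  clear_value B g
  let A : Fin 4 → Fin 4 → Set V := fun u v => p '' B (min u v) (max u v)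
  have hmm : ∀ u v : Fin 4, u ≠ v → min u v < max u v := by
    intro u v huv; exact min_lt_max.2 huv
  refine mkSub G _ _ (fun u => p (g u)) ?_ ?_ A ?_ ?_ ?_ ?_
  · intro u v huv
    exact hginj u v (h.inj _ _ (hg u) (hg v) huv)
  · intro u
    exact h.memT _ (hg u)
  · rintro u v huv _ ⟨k, hk, rfl⟩
    exact h.memT _ (hBn _ _ (hmm u v huv) k hk)
  · intro u v huv
    rcases lt_or_gt_of_ne huv with hlt | hlt
    · simpa [A, min_eq_left hlt.le, max_eq_right hlt.le] using hJ u v hlt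
    · simpa [A, min_eq_right hlt.le, max_eq_left hlt.le] using (hJ v u hlt).symm
  · intro u v z huv hz
    have := hBg _ _ z (hmm u v huv) (h.image (hBn _ _ (hmm u v huv)) (hg z) hz)
    grind
  · rintro u v u' v' huv huv' hne _ ⟨k, hk, rfl⟩ hk'
    have hk2 := h.image (hBn _ _ (hmm u' v' huv')) (hBn _ _ (hmm u v huv) k hk) hk'
    have hne' : min u v ≠ min u' v' ∨ max u v ≠ max u' v' := by
      by_contra hcon
      apply hne
      rw [Sym2.eq_iff]
      grind
    have := hBB _ _ _ _ (hmm u v huv) (hmm u' v' huv') hne' k hk hk2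
    clear hBB hBg hBn hJ hginj
    rcases min_choice u v with e | e <;> rcases max_choice u v with e' | e' <;>
      rw [e, e'] at this <;> rcases this with rfl | rfl <;> simp

/-- Inserting a detour makes the path longer. -/
lemma reroute {V : Type u} {G : SimpleGraph V} {x y : V} {S : Set V} {p : ℕ → V} {n : ℕ}
    (h : PathFn G x y S p n) (i : ℕ) (hi : i < n) (D : Set V) (hDS : D ⊆ S)
    (hDp : ∀ k ≤ n, p k ∉ D) (d e : V) (hd : G.Adj (p i) d) (he : G.Adj (p (i + 1)) e)
    (hJ : Joined' G D d e) : ∃ q m, n < m ∧ PathFn G x y S q m := by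
  classical
  obtain ⟨w, hw⟩ := hJ
  let w' := w.bypass
  have hw' : ∀ v ∈ w'.support, v ∈ D := fun v hv => hw v (w.support_bypass_subset_support hv)
  have hp : w'.IsPath := w.bypass_isPath
  set l := w'.length with hl
  have hr : ∀ k, w'.getVert k ∈ D := fun k => hw' _ (w'.getVert_mem_support k)
  have hr0 : w'.getVert 0 = d := by simp
  have hrl : w'.getVert l = e := by simp [hl]
  have hrinj : ∀ a b, a ≤ l → b ≤ l → w'.getVert a = w'.getVert b → a = b :=
    fun a b ha hb hab => hp.getVert_injOn ha hb hab
  have hradj : ∀ k < l, G.Adj (w'.getVert k) (w'.getVert (k + 1)) :=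
    fun k hk => w'.adj_getVert_succ hk
  generalize w'.getVert = r at *
  clear_value l
  obtain ⟨hs, hf, hm, hin, ha⟩ := h
  let q : ℕ → V := fun k => if k ≤ i then p k else if k ≤ i + 1 + l then r (k - i - 1)
    else p (k - l - 1)
  have q1 : ∀ k, k ≤ i → q k = p k := fun k hk => if_pos hk
  have q2 : ∀ k, i < k → k ≤ i + 1 + l → q k = r (k - i - 1) := fun k hk hk' => by
    simp only [q]; rw [if_neg (by omega), if_pos hk']
  have q3 : ∀ k, i + 1 + l < k → q k = p (k - l - 1) := fun k hk => by
    simp only [q]; rw [if_neg (by omega), if_neg (by omega)]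
  refine ⟨q, n + l + 1, by omega, ?_, ?_, ?_, ?_, ?_⟩
  · simp [q, hs]
  · simp only [q]
    rw [if_neg (by omega), if_neg (by omega), ← hf]
    congr 1; omega
  · intro k h0 h1
    simp only [q]
    split_ifs
    · exact hm k h0 (by omega)
    · exact hDS (hr _)
    · exact hm _ (by omega) (by omega)
  · intro a b ha' hb'
    simp only [q]
    split_ifs <;> intro hab
    · exact hin _ _ (by omega) (by omega) hab
    · exact absurd (hab ▸ hr _) (hDp a (by omega))
    · have := hin _ _ (by omega) (by omega) hab
      omega
    · exact absurd (hab ▸ hr _) (hDp b (by omega))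
    · have := hrinj _ _ (by omega) (by omega) hab
      omega
    · exact absurd (hab ▸ hr _) (hDp (b - l - 1) (by omega))
    · have := hin _ _ (by omega) (by omega) hab
      omega
    · exact absurd (hab ▸ hr _) (hDp (a - l - 1) (by omega))
    · have := hin _ _ (by omega) (by omega) hab
      omega
  · intro k hk
    rcases lt_trichotomy k i with h1 | rfl | h1
    · rw [q1 _ (by omega), q1 _ (by omega)]
      exact ha k (by omega)
    · rw [q1 _ (by omega), q2 _ (by omega) (by omega)]
      simpa [hr0] using hd
    · rcases lt_trichotomy k (i + 1 + l) with h2 | rfl | h2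
      · rw [q2 _ (by omega) (by omega), q2 _ (by omega) (by omega)]
        have := hradj (k - i - 1) (by omega)
        rwa [show k - i - 1 + 1 = k + 1 - i - 1 by omega] at this
      · rw [q2 _ (by omega) (by omega), q3 _ (by omega)]
        rw [show i + 1 + l - i - 1 = l by omega, show i + 1 + l + 1 - l - 1 = i + 1 by omega, hrl]
        exact he.symm
      · rw [q3 _ (by omega), q3 _ (by omega)]
        have := ha (k - l - 1) (by omega)
        rwa [show k - l - 1 + 1 = k + 1 - l - 1 by omega] at this

lemma Joined'.self {V : Type u} {G : SimpleGraph V} {A : Set V} {s v : V}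
    (h : Joined' G A s v) : Joined' G {v | Joined' G A s v} s v := by
  classical
  obtain ⟨w, hw⟩ := h
  refine ⟨w, fun z hz => ⟨w.takeUntil z hz, fun t ht => hw t ?_⟩⟩
  exact w.support_takeUntil_subset_support hz ht

lemma Joined'.ofMap {V : Type u} {W : Type*} {G : SimpleGraph V} {H : SimpleGraph W} (f : H →g G)
    {a b : W} (w : H.Walk a b) (A : Set V) (h : ∀ z ∈ w.support, f z ∈ A) :
    Joined' G A (f a) (f b) := by
  refine ⟨w.map f, ?_⟩
  intro v hv
  rw [Walk.support_map, List.mem_map] at hv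
  obtain ⟨z, hz, rfl⟩ := hv
  exact h z hz

lemma main_aux {V : Type u} [Finite V] (G : SimpleGraph V)
    (hcomp : ∀ x y : V, ¬ Compliant G x y)
    (x y : V) (hxy : G.Adj x y) (S : Set V) (hx : x ∉ S) (hy : y ∉ S) (hne : S.Nonempty)
    (hSJ : ∀ s ∈ S, ∀ t ∈ S, Joined' G S s t)
    (hSN : ∀ s ∈ S, ∀ v, G.Adj s v → v ∈ S ∪ {x, y})
    (h2 : ∀ v a b, a ≠ v → b ≠ v → Joined' G {v}ᶜ a b) :
    ¬ Outerplanar (G.induce (S ∪ {x, y})) := by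
  classical
  rintro ⟨hK4, hK23⟩
  have hxyne : x ≠ y := hxy.ne
  -- a longest path
  obtain ⟨n, ⟨p, hp⟩, hmax⟩ : ∃ n, (∃ p, PathFn G x y S p n) ∧
      ∀ m, (∃ q, PathFn G x y S q m) → m ≤ n := by
    have hbdd : BddAbove {n | ∃ p, PathFn G x y S p n} := by
      refine ⟨Nat.card V, ?_⟩
      rintro m ⟨q, hq⟩
      have hinj : Function.Injective (fun k : Fin (m + 1) => q k) := by
        intro a b hab
        exact Fin.ext (hq.inj a b (by omega) (by omega) hab)
      have := Nat.card_le_card_of_injective _ hinj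
      simp at this
      omega
    have hnon : {n | ∃ p, PathFn G x y S p n}.Nonempty := by
      refine ⟨1, fun k => if k = 0 then x else y, by simp, by simp, by omega, ?_, ?_⟩
      · intro i j hi hj
        have : i = 0 ∨ i = 1 := by omega
        have : j = 0 ∨ j = 1 := by omega
        grind
      · intro k hk
        obtain rfl : k = 0 := by omega
        simpa using hxy
    exact ⟨_, Nat.sSup_mem hnon hbdd, fun m hm => le_csSup hbdd hm⟩
  have hlong : ∀ i < n, ∀ D ⊆ S, (∀ k ≤ n, p k ∉ D) → ∀ d e, G.Adj (p i) d →
      G.Adj (p (i + 1)) e → Joined' G D d e → False := by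
    intro i hi D hDS hDp d e hd he hJ
    obtain ⟨q, m, hm, hq⟩ := reroute hp i hi D hDS hDp d e hd he hJ
    have := hmax m ⟨q, hq⟩
    omega
  have hn2 : 2 ≤ n := by
    by_contra hlt
    have hn0 : n ≠ 0 := by
      rintro rfl
      exact hxyne (hp.start.symm.trans hp.fin)
    obtain rfl : n = 1 := by omega
    obtain ⟨s, hs⟩ := hne
    have hsx : s ≠ x := fun h => hx (h ▸ hs)
    have hsy : s ≠ y := fun h => hy (h ▸ hs)
    obtain ⟨u, v, huv, hu, hv, hvy⟩ := (h2 y s x hsy hxyne).boundary S hs hx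
    obtain ⟨u', v', huv', hu', hv', hvx⟩ := (h2 x s y hsx hxyne.symm).boundary S hs hy
    have e1 : v = x := by
      have := hSN u hu v huv
      simp at this hvy
      grind
    have e2 : v' = y := by
      have := hSN u' hu' v' huv'
      simp at this hvx
      grind
    subst e1 e2
    refine hlong 0 (by omega) S subset_rfl ?_ u u' ?_ ?_ (hSJ u hu u' hu')
    · intro k hk
      have : k = 0 ∨ k = 1 := by omega
      rcases this with rfl | rfl
      · rwa [hp.start]
      · rwa [hp.fin]
    · rw [hp.start]; exact huv.symm
    · rw [zero_add, hp.fin]; exact huv'.symm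
  have hp0n : G.Adj (p 0) (p n) := by rw [hp.start, hp.fin]; exact hxy
  -- the path is Hamiltonian
  have ham : ∀ s ∈ S, ∃ k ≤ n, p k = s := by
    intro s hs
    by_contra hsP
    let D : Set V := {v | Joined' G (S \ (p '' Set.Iic n)) s v}
    have hDsub : ∀ v ∈ D, v ∈ S \ (p '' Set.Iic n) := fun v hv => hv.right
    have hDS : D ⊆ S := fun v hv => (hDsub v hv).1
    have hDp : ∀ k ≤ n, p k ∉ D := fun k hk hk' => (hDsub _ hk').2 ⟨k, hk, rfl⟩
    have hsD : s ∈ D := Joined'.refl ⟨hs, fun ⟨k, hk, e⟩ => hsP ⟨k, hk, e⟩⟩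
    have hDJ : ∀ u ∈ D, ∀ v ∈ D, Joined' G D u v := fun u hu v hv =>
      (Joined'.self hu).symm.trans (Joined'.self hv)
    have hcl : ∀ u ∈ D, ∀ v, G.Adj u v → v ∉ D → ∃ k ≤ n, p k = v := by
      intro u hu v huv hv
      by_contra hvP
      have hvT := hSN u (hDS hu) v huv
      rcases hvT with hvS | rfl | rfl
      · apply hv
        have h1 : v ∈ S \ (p '' Set.Iic n) := ⟨hvS, fun ⟨k, hk, e⟩ => hvP ⟨k, hk, e⟩⟩
        exact Joined'.trans hu (Joined'.adj huv (hDsub u hu) h1)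
      · exact hvP ⟨0, by omega, hp.start⟩
      · exact hvP ⟨n, le_rfl, hp.fin⟩
    have key : ∀ a b, a < b → b ≤ n → (a ≠ 0 ∨ b ≠ n) → ∀ d ∈ D, ∀ e ∈ D,
        G.Adj (p a) d → G.Adj (p b) e → False := by
      intro a b hab hbn hne' d hd e he had hbe
      rcases Nat.eq_or_lt_of_le (Nat.succ_le_of_lt hab) with rfl | hlt
      · exact hlong a (by omega) D hDS hDp d e had hbe (hDJ d hd e he)
      · let E : Set ℕ := {k | (k < a ∨ b ≤ k) ∧ k ≤ n}
        have hbJ : Joined' G (p '' E) (p n) (p b) :=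
          (segJoined G p n hp.adj b n hbn le_rfl).symm.mono
            (Set.image_mono fun k hk => ⟨Or.inr hk.1, hk.2⟩)
        obtain ⟨c, hc, hca, hac, hcJ⟩ : ∃ c ≤ n, (c < a ∨ b < c) ∧ G.Adj (p a) (p c) ∧
            Joined' G (p '' E) (p c) (p b) := by
          rcases Nat.eq_zero_or_pos a with rfl | ha
          · exact ⟨n, le_rfl, by omega, hp0n, hbJ⟩
          · refine ⟨a - 1, by omega, by omega, ?_, ?_⟩
            · have := (hp.adj (a - 1) (by omega)).symm
              rwa [show a - 1 + 1 = a by omega] at this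
            · have e1 : Joined' G (p '' E) (p (a - 1)) (p 0) :=
                (segJoined G p n hp.adj 0 (a - 1) (by omega) (by omega)).symm.mono
                  (Set.image_mono fun k hk => ⟨Or.inl (by have := hk.2; omega),
                    by have := hk.2; omega⟩)
              exact e1.trans (Joined'.trans (Joined'.adj hp0n e1.right hbJ.left) hbJ)
        apply hK23
        have hIn : ∀ k ∈ Set.Icc (a + 1) b, k ≤ n := fun k hk => hk.2.trans hbn
        have hEn : ∀ k ∈ E, k ≤ n := fun k hk => hk.2
        have c0 : ∀ w, w ∈ p '' Set.Icc (a + 1) b → w ∈ D ∪ {p b} → w = p b := by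
          rintro _ ⟨k, hk, rfl⟩ (h | h)
          · exact absurd h (hDp k (hIn k hk))
          · exact h
        have c1 : ∀ w, w ∈ p '' E → w ∈ D ∪ {p b} → w = p b := by
          rintro _ ⟨k, hk, rfl⟩ (h | h)
          · exact absurd h (hDp k (hEn k hk))
          · exact h
        have c2 : ∀ w, w ∈ p '' Set.Icc (a + 1) b → w ∈ p '' E → w = p b := by
          rintro _ ⟨k, hk, rfl⟩ h
          have h1 := (hp.image hEn (hIn k hk) h).1
          have h2 := hk.1
          have h3 := hk.2
          rw [show k = b by omega]
        refine mkK23 G _ (p a) (p b) ?_ (hp.memT a (by omega)) (hp.memT b hbn)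
          ![p '' Set.Icc (a + 1) b, D ∪ {p b}, p '' E] ![p (a + 1), d, p c] ?_ ?_ ?_ ?_ ?_ ?_
        · intro h
          have := hp.inj a b (by omega) hbn h
          omega
        · intro i
          fin_cases i
          · rintro _ ⟨k, hk, rfl⟩
            exact hp.memT k (hIn k hk)
          · rintro w (h | rfl)
            · exact Or.inl (hDS h)
            · exact hp.memT b hbn
          · rintro _ ⟨k, hk, rfl⟩
            exact hp.memT k (hEn k hk)
        · intro i
          fin_cases i
          · intro h
            have := (hp.image hIn (by omega) h).1
            omega
          · rintro (h | h)
            · exact hDp a (by omega) h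
            · have := hp.inj a b (by omega) hbn h
              omega
          · intro h
            have := (hp.image hEn (by omega) h).1
            omega
        · intro i j hij w
          fin_cases i <;> fin_cases j
          · exact absurd rfl hij
          · exact c0 w
          · exact c2 w
          · exact fun h h' => c0 w h' h
          · exact absurd rfl hij
          · exact fun h h' => c1 w h' h
          · exact fun h h' => c2 w h' h
          · exact c1 w
          · exact absurd rfl hij
        · intro i
          fin_cases i
          · intro h
            have := hp.inj (a + 1) b (by omega) hbn h
            omega
          · intro h
            have h' : d = p b := h
            exact hDp b hbn (h' ▸ hd)
          · intro h
            have := hp.inj c b (by omega) hbn h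
            omega
        · intro i
          fin_cases i
          · exact hp.adj a (by omega)
          · exact had
          · exact hac
        · intro i
          fin_cases i
          · exact segJoined G p n hp.adj (a + 1) b (by omega) hbn
          · exact ((hDJ d hd e he).mono Set.subset_union_left).trans
              (Joined'.adj hbe.symm (Or.inl he) (Or.inr rfl))
          · exact hcJ
    have hp1 : p 1 ∈ S := hp.mem 1 (by omega) (by omega)
    obtain ⟨u, v, huv, hu, hv, hvS⟩ := (hSJ s hs _ hp1).boundary D hsD (hDp 1 (by omega))
    obtain ⟨k, hk, rfl⟩ := hcl u hu v huv hv
    have hk0 : k ≠ 0 := by rintro rfl; exact hx (hp.start ▸ hvS)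
    have hkn : k ≠ n := by rintro rfl; exact hy (hp.fin ▸ hvS)
    have hsk : s ≠ p k := fun h => hv (h ▸ hsD)
    have hxk : x ≠ p k := fun h => hx (h ▸ hvS)
    have hxD : x ∉ D := fun h => hx (hDS h)
    obtain ⟨u', v', huv', hu', hv', hvk⟩ := (h2 (p k) s x hsk hxk).boundary D hsD hxD
    obtain ⟨k', hk', rfl⟩ := hcl u' hu' v' huv' hv'
    have hkk : k ≠ k' := by rintro rfl; exact hvk rfl
    rcases lt_or_gt_of_ne hkk with h | h
    · exact key k k' h hk' (Or.inl hk0) u hu u' hu' huv.symm huv'.symm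
    · exact key k' k h hk (Or.inr hkn) u' hu' u hu huv'.symm huv.symm
  have hamT : ∀ s ∈ S ∪ {x, y}, ∃ k ≤ n, p k = s := by
    rintro s (h | rfl | rfl)
    · exact ham s h
    · exact ⟨0, by omega, hp.start⟩
    · exact ⟨n, le_rfl, hp.fin⟩
  -- a shortest chord
  have hex : ∃ l, ∃ i, 2 ≤ l ∧ i + l ≤ n ∧ G.Adj (p i) (p (i + l)) :=
    ⟨n, 0, hn2, by omega, by simpa using hp0n⟩
  obtain ⟨i, hl2, hil, hadj⟩ := Nat.find_spec hex
  have hmin : ∀ a b, a + 2 ≤ b → b ≤ n → G.Adj (p a) (p b) → Nat.find hex ≤ b - a := by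
    intro a b hab hb hadj'
    refine Nat.find_min' hex ⟨a, by omega, by omega, ?_⟩
    rwa [show a + (b - a) = b by omega]
  generalize Nat.find hex = l at *
  obtain ⟨w, hw⟩ := segWalk G p n hp.adj l i (i + l) rfl hil
  refine hcomp _ _ ⟨hadj, w, ?_, ?_, ?_⟩
  · rw [Walk.isPath_def, hw]
    refine List.Nodup.map_on ?_ List.nodup_range'
    intro a ha b hb hab
    simp only [List.mem_range'_1] at ha hb
    exact hp.inj a b (by omega) (by omega) hab
  · have := w.length_support
    rw [hw] at this
    simp at this
    omega
  · intro v hv hvi hvj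
    rw [hw] at hv
    simp only [List.mem_map, List.mem_range'_1] at hv
    obtain ⟨k, hk, rfl⟩ := hv
    have hki : k ≠ i := by rintro rfl; exact hvi rfl
    have hkj : k ≠ i + l := by rintro rfl; exact hvj rfl
    have hset : G.neighborSet (p k) = {p (k - 1), p (k + 1)} := by
      ext v
      simp only [mem_neighborSet, Set.mem_insert_iff, Set.mem_singleton_iff]
      constructor
      · intro hkv
        obtain ⟨m, hm, rfl⟩ := hamT v (hSN (p k) (hp.mem k (by omega) (by omega)) v hkv)
        have hmk : m ≠ k := by rintro rfl; exact hkv.ne rfl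
        by_contra hcon
        have hm1 : m ≠ k - 1 := by rintro rfl; exact hcon (Or.inl rfl)
        have hm2 : m ≠ k + 1 := by rintro rfl; exact hcon (Or.inr rfl)
        rcases lt_or_gt_of_ne hmk with h | h
        · have := hmin m k (by omega) (by omega) hkv.symm
          exact hK4 (mkK4 hp hxy m i k (i + l) (by omega) (by omega) (by omega) hil hkv.symm hadj)
        · have := hmin k m (by omega) (by omega) hkv
          exact hK4 (mkK4 hp hxy i k (i + l) m (by omega) (by omega) (by omega) hm hadj hkv)
      · rintro (rfl | rfl)
        · have := (hp.adj (k - 1) (by omega)).symm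
          rwa [show k - 1 + 1 = k by omega] at this
        · exact hp.adj k (by omega)
    rw [hset]
    apply Set.ncard_pair
    intro h
    have := hp.inj _ _ (by omega) (by omega) h
    omega

/-- Let `G` be a 2-connected graph with no compliant edges that is not a cycle,
let `xy` be an edge, `S` the vertex set of a connected component of `G - {x,y}`,
and `H` the subgraph induced on `S ∪ {x,y}`. Then `H` is not outerplanar. -/
theorem stmt5 {V : Type u} [Finite V] (G : SimpleGraph V)
    (h2 : TwoConnected G) (hnc : ¬ IsCycleGraph G)
    (hcomp : ∀ x y : V, ¬ Compliant G x y)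
    (x y : V) (hxy : G.Adj x y) (S : Set V)
    (hS : ∃ c : (G.induce ({x, y}ᶜ : Set V)).ConnectedComponent,
        S = Subtype.val '' c.supp) :
    ¬ Outerplanar (G.induce (S ∪ {x, y})) := by
  classical
  obtain ⟨c, rfl⟩ := hS
  refine main_aux G hcomp x y hxy _ ?_ ?_ ?_ ?_ ?_ ?_
  · rintro ⟨z, -, h⟩
    exact z.2 (by simp [h])
  · rintro ⟨z, -, h⟩
    exact z.2 (by simp [h])
  · exact c.nonempty_supp.image _
  · rintro _ ⟨s, hs, rfl⟩ _ ⟨t, ht, rfl⟩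
    have hr : (G.induce ({x, y}ᶜ : Set V)).Reachable s t :=
      ConnectedComponent.exact (hs.trans ht.symm)
    obtain ⟨w⟩ := hr
    refine Joined'.ofMap (Embedding.induce _).toHom w _ ?_
    intro z hz
    refine ⟨z, ?_, rfl⟩
    have : (G.induce ({x, y}ᶜ : Set V)).Reachable s z := ⟨w.takeUntil z hz⟩
    exact (ConnectedComponent.sound this.symm).trans hs
  · rintro _ ⟨s, hs, rfl⟩ v hv
    by_cases hvx : v ∈ ({x, y} : Set V)
    · exact Or.inr hvx
    · left
      refine ⟨⟨v, hvx⟩, ?_, rfl⟩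
      have : (G.induce ({x, y}ᶜ : Set V)).Adj s ⟨v, hvx⟩ := hv
      exact (ConnectedComponent.sound this.reachable.symm).trans hs
  · intro v a b ha hb
    obtain ⟨w⟩ := (h2.2 v).preconnected ⟨a, by simpa using ha⟩ ⟨b, by simpa using hb⟩
    refine Joined'.ofMap (Subgraph.hom _) w _ ?_
    intro z hz
    exact z.2.2
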